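/- For all integers L ≥ 0 and all integers a, [2L choose L−a]_q = ∑_{k=0}^{L} q^{binom(k,2)−binom(a,2)} · (1+q^L)/(1+q^a) · [L choose k]_q · T_1(k,a). -/

import Mathlib

open Finset

/-- The variable `q`, realized as the generator of the field of rational functions over `ℚ`. -/
noncomputable def qq : RatFunc ℚ := RatFunc.X

/-- `(x)_n = ∏_{j=1}^n (1 - x^j)`. -/
noncomputable def qPoch (x : RatFunc ℚ) (n : ℕ) : RatFunc ℚ :=
  ∏ j ∈ Finset.range n, (1 - x ^ (j + 1))

/-- Gaussian binomial coefficient `[n choose k]_x`, zero unless `0 ≤ k ≤ n`. -/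
noncomputable def qBin (x : RatFunc ℚ) (n k : ℤ) : RatFunc ℚ :=
  if 0 ≤ k ∧ k ≤ n then qPoch x n.toNat / (qPoch x k.toNat * qPoch x (n - k).toNat) else 0

/-- The `q`-trinomial coefficient `[L, b; a]_2` in base `x`. -/
noncomputable def qTri (x : RatFunc ℚ) (L : ℕ) (b a : ℤ) : RatFunc ℚ :=
  ∑ k ∈ Finset.range (L + 1),
    x ^ ((k : ℤ) * (k + b)) * qBin x (L : ℤ) (k : ℤ) * qBin x ((L : ℤ) - k) ((k : ℤ) + a)

/-- The `q`-trinomial `T_n(L, a)`, written in terms of `s = q^{1/2}` (so the base is `s^2`):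
`T_n(L,a) = ∑ s^{r(r-n)} (s²)_L / ((s²)_{(L-a-r)/2} (s²)_{(L+a-r)/2} (s²)_r)`,
the sum over `r ≥ 0` with `L - a - r` even and `r ≤ L - |a|`; zero for `|a| > L`. -/
noncomputable def qT (s : RatFunc ℚ) (n : ℤ) (L : ℕ) (a : ℤ) : RatFunc ℚ :=
  ∑ r ∈ Finset.range (L + 1),
    if Even ((L : ℤ) - a - r) ∧ (r : ℤ) ≤ (L : ℤ) - |a| then
      s ^ ((r : ℤ) * ((r : ℤ) - n)) * qPoch (s ^ 2) L /
        (qPoch (s ^ 2) (((L : ℤ) - a - r) / 2).toNat *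
          qPoch (s ^ 2) (((L : ℤ) + a - r) / 2).toNat * qPoch (s ^ 2) r)
    else 0

/-- The Cartan matrix of the Lie algebra `A_n`. -/
def cartanA (n : ℕ) (i j : Fin n) : ℤ :=
  if i = j then 2 else if |(i : ℤ) - (j : ℤ)| = 1 then -1 else 0

/-!
Put `x = s ^ 2`, write `[N, j]` for Gaussian binomials in base `x`, and let `k` and `r` be the
summation indices of the right-hand side and of `T_1(k, a)`. In the variables
`m = (k - a - r) / 2` and `n = m + r` one has `k = n + m + a`, the powers of `s` combine to
`x ^ (n * (n + a - 1)) * x ^ (m * (m + a))`, and the quotient of `q`-factorials becomes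
`[L, n] [n, m] [L - n, m + a]`. The `q`-Vandermonde identity sums over `m`, leaving
`∑ n, x ^ (n * (n + a - 1)) * [L, n] * [L, n + a]`. Because of the `-1` in the exponent this is not
yet a Vandermonde sum, but Pascal's rule on `[L, n]` splits it into two of them, with total
`[2 * L - 1, L + a - 1] + x ^ a * [2 * L - 1, L + a]`; the two forms of Pascal's rule then identify
`1 + x ^ L` times this with `(1 + x ^ a) * [2 * L, L + a]`.
-/

lemma sum_range_eq_sum_range_add {M : Type*} [AddCommMonoid M] {f : ℕ → M} {c N : ℕ}
    (hlow : ∀ j < c, f j = 0) (hhigh : ∀ j, N ≤ j → f j = 0) :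
    ∑ j ∈ range N, f j = ∑ j ∈ range N, f (c + j) :=
  calc ∑ j ∈ range N, f j
    _ = ∑ j ∈ range (N + c), f j := by
      rw [sum_range_add, sum_eq_zero fun j _ => hhigh (N + j) (Nat.le_add_right N j), add_zero]
    _ = ∑ j ∈ range N, f (c + j) := by
      rw [add_comm N c, sum_range_add, sum_eq_zero fun j hj => hlow j (mem_range.mp hj), zero_add]

lemma one_sub_pow_succ_ne_zero {R : Type*} [Ring R] {x : R} (hx : ¬ IsOfFinOrder x) (n : ℕ) :
    1 - x ^ (n + 1) ≠ 0 := fun h =>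
  hx (isOfFinOrder_iff_pow_eq_one.mpr ⟨n + 1, n.succ_pos, (sub_eq_zero.mp h).symm⟩)

lemma one_add_zpow_ne_zero {K : Type*} [DivisionRing K] [NeZero (2 : K)] {x : K}
    (hx : ¬ IsOfFinOrder x) (a : ℤ) : 1 + x ^ a ≠ 0 := by
  have pow_ne (n : ℕ) : x ^ n ≠ -1 := by
    intro h
    have hn : n ≠ 0 := by
      rintro rfl
      rw [pow_zero, ← add_eq_zero_iff_eq_neg, one_add_one_eq_two] at h
      exact two_ne_zero h
    refine hx (IsOfFinOrder.of_pow (n := n) ?_ hn)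
    exact isOfFinOrder_iff_pow_eq_one.mpr ⟨2, two_pos, by rw [h, neg_one_sq]⟩
  intro h
  rw [add_comm, add_eq_zero_iff_eq_neg] at h
  obtain ⟨n, rfl | rfl⟩ := a.eq_nat_or_neg
  · exact pow_ne n (by rwa [zpow_natCast] at h)
  · exact pow_ne n (by rwa [zpow_neg, zpow_natCast, inv_eq_iff_eq_inv, inv_neg_one] at h)

lemma not_isOfFinOrder_ratFunc_X {K : Type*} [Field K] :
    ¬ IsOfFinOrder (RatFunc.X : RatFunc K) := fun h => by
  obtain ⟨n, hn, hX⟩ := isOfFinOrder_iff_pow_eq_one.mp h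
  exact RatFunc.transcendental_X.pow hn (hX ▸ isAlgebraic_one)

section QBinomial

variable {x : RatFunc ℚ}

/-- The inverse `q`-factorial `1 / (x)_n`, extended by zero to negative integers `n`. With this
convention products of such factors vanish outside the range of summation by themselves. -/
noncomputable def invQPoch (x : RatFunc ℚ) (n : ℤ) : RatFunc ℚ :=
  if n < 0 then 0 else (qPoch x n.toNat)⁻¹

lemma invQPoch_of_neg {n : ℤ} (hn : n < 0) : invQPoch x n = 0 := if_pos hn

lemma invQPoch_of_nonneg {n : ℤ} (hn : 0 ≤ n) : invQPoch x n = (qPoch x n.toNat)⁻¹ :=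
  if_neg hn.not_gt

lemma invQPoch_natCast (n : ℕ) : invQPoch x n = (qPoch x n)⁻¹ := by
  rw [invQPoch_of_nonneg n.cast_nonneg, Int.toNat_natCast]

lemma qPoch_succ (n : ℕ) : qPoch x (n + 1) = qPoch x n * (1 - x ^ (n + 1)) :=
  prod_range_succ _ n

lemma qPoch_ne_zero (hx : ¬ IsOfFinOrder x) (n : ℕ) : qPoch x n ≠ 0 :=
  prod_ne_zero_iff.mpr fun j _ => one_sub_pow_succ_ne_zero hx j

lemma invQPoch_sub_one (hx : ¬ IsOfFinOrder x) (n : ℤ) :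
    invQPoch x (n - 1) = (1 - x ^ n) * invQPoch x n := by
  rcases lt_trichotomy n 0 with hn | rfl | hn
  · rw [invQPoch_of_neg hn, invQPoch_of_neg (by omega), mul_zero]
  · rw [invQPoch_of_neg (by omega), zpow_zero, sub_self, zero_mul]
  · obtain ⟨m, rfl⟩ : ∃ m : ℕ, n = (m + 1 : ℕ) := ⟨(n - 1).toNat, by omega⟩
    have hm := one_sub_pow_succ_ne_zero hx m
    rw [show ((m + 1 : ℕ) : ℤ) - 1 = m by push_cast; ring, invQPoch_natCast, invQPoch_natCast,
      qPoch_succ, zpow_natCast, mul_inv, mul_comm, inv_mul_cancel_right₀ hm]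

lemma qBin_eq_mul_invQPoch (n : ℕ) (k : ℤ) :
    qBin x n k = qPoch x n * (invQPoch x k * invQPoch x (n - k)) := by
  unfold qBin
  split_ifs with h
  · rw [invQPoch_of_nonneg h.1, invQPoch_of_nonneg (by omega), Int.toNat_natCast, div_eq_mul_inv,
      mul_inv]
  · rcases lt_or_ge k 0 with hk | hk
    · rw [invQPoch_of_neg hk, zero_mul, mul_zero]
    · rw [invQPoch_of_neg (n := n - k) (by omega), mul_zero, mul_zero]

lemma qBin_sub_right (n : ℕ) (k : ℤ) : qBin x n (n - k) = qBin x n k := by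
  rw [qBin_eq_mul_invQPoch, qBin_eq_mul_invQPoch, sub_sub_cancel, mul_comm (invQPoch x k)]

lemma qBin_of_neg {n k : ℤ} (hk : k < 0) : qBin x n k = 0 :=
  if_neg fun h => h.1.not_gt hk

lemma qBin_zero_left_of_ne_zero {k : ℤ} (hk : k ≠ 0) : qBin x 0 k = 0 :=
  if_neg fun h => hk (le_antisymm h.2 h.1)

lemma qBin_zero_zero : qBin x 0 0 = 1 := by
  simp [qBin, qPoch]

lemma qBin_succ_left (h0 : x ≠ 0) (hx : ¬ IsOfFinOrder x) (n : ℕ) (k : ℤ) :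
    qBin x (n + 1 : ℕ) k = qBin x n (k - 1) + x ^ k * qBin x n k := by
  have hk := invQPoch_sub_one hx k
  have hnk := invQPoch_sub_one hx (n + 1 - k)
  rw [show (n : ℤ) + 1 - k - 1 = n - k by ring] at hnk
  have hpow : x ^ (n + 1) = x ^ k * x ^ ((n : ℤ) + 1 - k) := by
    rw [← zpow_add₀ h0, add_sub_cancel, ← zpow_natCast, Nat.cast_succ]
  rw [qBin_eq_mul_invQPoch, qBin_eq_mul_invQPoch, qBin_eq_mul_invQPoch, qPoch_succ, hpow, hk, hnk,
    Nat.cast_succ, show (n : ℤ) - (k - 1) = n + 1 - k by ring]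
  ring

lemma qBin_succ_left' (h0 : x ≠ 0) (hx : ¬ IsOfFinOrder x) (n : ℕ) (k : ℤ) :
    qBin x (n + 1 : ℕ) k = qBin x n k + x ^ ((n : ℤ) + 1 - k) * qBin x n (k - 1) := by
  rw [← qBin_sub_right, qBin_succ_left h0 hx, Nat.cast_succ,
    show (n : ℤ) + 1 - k - 1 = n - k by ring, qBin_sub_right,
    show (n : ℤ) + 1 - k = n - (k - 1) by ring, qBin_sub_right]

theorem qVandermonde (h0 : x ≠ 0) (hx : ¬ IsOfFinOrder x) {n N : ℕ} (hN : n < N)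
    (B : ℕ) (a : ℤ) :
    ∑ m ∈ range N, x ^ ((m : ℤ) * (m + a)) * qBin x n m * qBin x B (m + a) =
      qBin x (n + B : ℕ) (n + a) := by
  induction n generalizing a N with
  | zero =>
    rw [sum_eq_single_of_mem 0 (mem_range.mpr hN)]
    · simp [qBin_zero_zero]
    · intro m _ hm
      rw [Nat.cast_zero, qBin_zero_left_of_ne_zero (Int.natCast_ne_zero.mpr hm), mul_zero, zero_mul]
  | succ n ih =>
    obtain ⟨M, rfl⟩ : ∃ M, N = M + 1 := ⟨N - 1, by omega⟩
    have shifted : ∑ m ∈ range (M + 1), x ^ ((m : ℤ) * (m + a)) *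
          (x ^ ((n : ℤ) + 1 - m) * qBin x n ((m : ℤ) - 1)) * qBin x B (m + a) =
        x ^ ((n : ℤ) + 1 + a) * ∑ m ∈ range M,
          x ^ ((m : ℤ) * (m + (a + 1))) * qBin x n m * qBin x B (m + (a + 1)) := by
      rw [sum_range_succ', qBin_of_neg (k := (0 : ℕ) - 1) (by simp), mul_sum]
      simp only [mul_zero, zero_mul, add_zero, Nat.cast_succ, add_sub_cancel_right]
      refine sum_congr rfl fun m _ => ?_
      have hpow : x ^ (((m : ℤ) + 1) * (m + 1 + a)) * x ^ ((n : ℤ) + 1 - (m + 1)) =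
          x ^ ((n : ℤ) + 1 + a) * x ^ ((m : ℤ) * (m + (a + 1))) := by
        rw [← zpow_add₀ h0, ← zpow_add₀ h0]
        ring_nf
      rw [← mul_assoc, hpow, show (m : ℤ) + 1 + a = m + (a + 1) by ring]
      ring
    calc ∑ m ∈ range (M + 1), x ^ ((m : ℤ) * (m + a)) * qBin x (n + 1 : ℕ) m * qBin x B (m + a)
      _ = qBin x (n + B : ℕ) (n + a) + x ^ ((n : ℤ) + 1 + a) *
            qBin x (n + B : ℕ) (n + (a + 1)) := by
        rw [← ih (by omega : n < M + 1) a, ← ih (by omega : n < M) (a + 1), ← shifted,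
          ← sum_add_distrib]
        refine sum_congr rfl fun m _ => ?_
        rw [qBin_succ_left' h0 hx]
        ring
      _ = qBin x (n + 1 + B : ℕ) ((n + 1 : ℕ) + a) := by
        rw [Nat.add_right_comm, qBin_succ_left h0 hx, Nat.cast_succ]
        ring_nf

lemma sum_zpow_sub_one_mul_qBin_succ_mul_qBin (h0 : x ≠ 0) (hx : ¬ IsOfFinOrder x) (L B : ℕ)
    (a : ℤ) :
    ∑ n ∈ range (L + 2), x ^ ((n : ℤ) * (n + a - 1)) * qBin x (L + 1 : ℕ) n * qBin x B (n + a) =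
      qBin x (L + B : ℕ) (L + a) + x ^ a * qBin x (L + B : ℕ) (L + (a + 1)) := by
  have shifted : ∑ n ∈ range (L + 2),
        x ^ ((n : ℤ) * (n + a - 1)) * qBin x L ((n : ℤ) - 1) * qBin x B (n + a) =
      x ^ a * ∑ n ∈ range (L + 1),
        x ^ ((n : ℤ) * (n + (a + 1))) * qBin x L n * qBin x B (n + (a + 1)) := by
    rw [sum_range_succ', qBin_of_neg (k := (0 : ℕ) - 1) (by simp), mul_sum]
    simp only [mul_zero, zero_mul, add_zero, Nat.cast_succ, add_sub_cancel_right]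
    refine sum_congr rfl fun n _ => ?_
    rw [show ((n : ℤ) + 1) * (n + 1 + a - 1) = a + n * (n + (a + 1)) by ring, zpow_add₀ h0,
      show (n : ℤ) + 1 + a = n + (a + 1) by ring]
    ring
  rw [← qVandermonde h0 hx (by omega : L < L + 2) B a,
    ← qVandermonde h0 hx L.lt_succ_self B (a + 1), ← shifted, ← sum_add_distrib]
  refine sum_congr rfl fun n _ => ?_
  rw [qBin_succ_left h0 hx, show (n : ℤ) * (n + a) = n * (n + a - 1) + n by ring, zpow_add₀ h0]
  ring

lemma one_add_zpow_mul_qBin_two_mul_succ (h0 : x ≠ 0) (hx : ¬ IsOfFinOrder x) (L : ℕ) (a : ℤ) :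
    (1 + x ^ a) * qBin x (2 * L + 1 + 1 : ℕ) (L + 1 + a) =
      (1 + x ^ (L + 1)) *
        (qBin x (2 * L + 1 : ℕ) (L + a) + x ^ a * qBin x (2 * L + 1 : ℕ) (L + (a + 1))) := by
  have pascal : qBin x (2 * L + 1 + 1 : ℕ) (L + 1 + a) =
      qBin x (2 * L + 1 : ℕ) (L + a) +
        x ^ (L + 1) * x ^ a * qBin x (2 * L + 1 : ℕ) (L + (a + 1)) := by
    rw [qBin_succ_left h0 hx, ← zpow_natCast x (L + 1), ← zpow_add₀ h0, Nat.cast_succ L,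
      show (L : ℤ) + 1 + a - 1 = L + a by ring, show (L : ℤ) + (a + 1) = L + 1 + a by ring]
  have pascal' : x ^ a * qBin x (2 * L + 1 + 1 : ℕ) (L + 1 + a) =
      x ^ a * qBin x (2 * L + 1 : ℕ) (L + (a + 1)) +
        x ^ (L + 1) * qBin x (2 * L + 1 : ℕ) (L + a) := by
    have hpow : x ^ (L + 1) = x ^ a * x ^ (((2 * L + 1 : ℕ) : ℤ) + 1 - (L + 1 + a)) := by
      rw [← zpow_natCast, ← zpow_add₀ h0]
      push_cast
      ring_nf
    rw [qBin_succ_left' h0 hx, hpow, show (L : ℤ) + 1 + a - 1 = L + a by ring,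
      show (L : ℤ) + (a + 1) = L + 1 + a by ring]
    ring
  linear_combination pascal + pascal'

theorem one_add_pow_mul_sum_zpow_sub_one_mul_qBin_mul_qBin (h0 : x ≠ 0) (hx : ¬ IsOfFinOrder x)
    (L : ℕ) (a : ℤ) :
    (1 + x ^ L) * ∑ n ∈ range (L + 1), x ^ ((n : ℤ) * (n + a - 1)) * qBin x L n * qBin x L (n + a) =
      (1 + x ^ a) * qBin x (2 * L : ℕ) (L + a) := by
  cases L with
  | zero =>
    rcases eq_or_ne a 0 with rfl | ha
    · simp [qBin_zero_zero]
    · simp [qBin_zero_left_of_ne_zero ha]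
  | succ L =>
    rw [sum_zpow_sub_one_mul_qBin_succ_mul_qBin h0 hx, show L + (L + 1) = 2 * L + 1 by ring,
      ← one_add_zpow_mul_qBin_two_mul_succ h0 hx, Nat.cast_succ]
    rfl

end QBinomial

section QTrinomial

variable {x : RatFunc ℚ}

lemma qT_eq_sum_invQPoch (s : RatFunc ℚ) (j : ℤ) {k N : ℕ} (hN : k < N) (a : ℤ) :
    qT s j k a = ∑ m ∈ range N, s ^ (((k : ℤ) - a - 2 * m) * (k - a - 2 * m - j)) *
      (qPoch (s ^ 2) k * (invQPoch (s ^ 2) m * invQPoch (s ^ 2) (m + a) *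
        invQPoch (s ^ 2) (k - a - 2 * m))) := by
  unfold qT
  rw [← sum_filter,
    ← sum_filter_of_ne (s := range N) (p := fun m : ℕ => 0 ≤ (m : ℤ) + a ∧ 0 ≤ (k : ℤ) - a - 2 * m)]
  · refine sum_nbij' (fun r => (((k : ℤ) - a - r) / 2).toNat)
      (fun m => ((k : ℤ) - a - 2 * m).toNat) ?_ ?_ ?_ ?_ ?_ <;>
      simp only [mem_filter, mem_range, le_sub_comm (c := |a|), abs_le, Int.even_iff]
    iterate 4 omega
    intro r hr
    obtain ⟨m, hm⟩ : ∃ m : ℕ, (k : ℤ) = r + 2 * m + a := ⟨(((k : ℤ) - a - r) / 2).toNat, by omega⟩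
    have hma : ((k : ℤ) + a - r) / 2 = m + a := by omega
    rw [show ((k : ℤ) - a - r) / 2 = m by omega, hma, Int.toNat_natCast,
      show (k : ℤ) - a - 2 * m = r by omega, invQPoch_natCast, invQPoch_natCast,
      invQPoch_of_nonneg (by omega), mul_div_assoc, div_eq_mul_inv, mul_inv, mul_inv]
  · refine fun m _ => Function.mtr fun h => ?_
    rcases not_and_or.mp h with h | h <;> simp [invQPoch_of_neg (not_le.mp h)]

lemma qBin_mul_qPoch (hx : ¬ IsOfFinOrder x) (L k : ℕ) :
    qBin x L k * qPoch x k = qPoch x L * invQPoch x (L - k) := by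
  have hk := qPoch_ne_zero hx k
  rw [qBin_eq_mul_invQPoch, invQPoch_natCast]
  field_simp

lemma qBin_mul_qT_eq_sum_invQPoch {s : RatFunc ℚ} (hx : ¬ IsOfFinOrder (s ^ 2)) (j : ℤ) {k L : ℕ}
    (hk : k ≤ L) (a : ℤ) :
    qBin (s ^ 2) L k * qT s j k a =
      ∑ m ∈ range (L + 1), s ^ (((k : ℤ) - a - 2 * m) * (k - a - 2 * m - j)) *
        (qPoch (s ^ 2) L * (invQPoch (s ^ 2) (L - k) * invQPoch (s ^ 2) m *
          invQPoch (s ^ 2) (m + a) * invQPoch (s ^ 2) (k - a - 2 * m))) := by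
  rw [qT_eq_sum_invQPoch s j (Nat.lt_succ_of_le hk), mul_sum]
  refine sum_congr rfl fun m _ => ?_
  rw [mul_left_comm, ← mul_assoc (qBin (s ^ 2) L k), qBin_mul_qPoch hx]
  ring

lemma qBin_mul_qBin_mul_qBin (hx : ¬ IsOfFinOrder x) {n L : ℕ} (hn : n ≤ L) (m b : ℤ) :
    qBin x L n * (qBin x n m * qBin x (L - n : ℕ) b) = qPoch x L *
      (invQPoch x (L - n - b) * invQPoch x m * invQPoch x b * invQPoch x (n - m)) := by
  have hn0 := qPoch_ne_zero hx n
  have hLn := qPoch_ne_zero hx (L - n)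
  rw [qBin_eq_mul_invQPoch, qBin_eq_mul_invQPoch, qBin_eq_mul_invQPoch, ← Nat.cast_sub hn,
    invQPoch_natCast, invQPoch_natCast]
  field_simp

lemma sum_mul_invQPoch_shift (g : ℤ → RatFunc ℚ) (L m : ℕ) (a : ℤ) :
    ∑ k ∈ range (L + 1), g k * (invQPoch x (L - k) * invQPoch x m * invQPoch x (m + a) *
        invQPoch x (k - a - 2 * m)) =
      ∑ n ∈ range (L + 1), g (n + m + a) * (invQPoch x (L - n - (m + a)) * invQPoch x m *
        invQPoch x (m + a) * invQPoch x (n - m)) := by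
  rcases lt_or_ge ((m : ℤ) + a) 0 with h | h
  · simp only [invQPoch_of_neg h, mul_zero, zero_mul]
  · obtain ⟨c, hc⟩ := Int.eq_ofNat_of_zero_le h
    rw [sum_range_eq_sum_range_add (c := c)]
    · refine sum_congr rfl fun n _ => ?_
      obtain rfl : a = c - m := by omega
      push_cast
      ring_nf
    · intro k hk
      rw [invQPoch_of_neg (n := k - a - 2 * m) (by omega), mul_zero, mul_zero]
    · intro k hk
      rw [invQPoch_of_neg (n := L - k) (by omega)]
      simp only [zero_mul, mul_zero]

theorem sum_zpow_mul_qBin_mul_qT {s : RatFunc ℚ} (h0 : s ≠ 0) (hs : ¬ IsOfFinOrder s) (L : ℕ)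
    (a : ℤ) :
    ∑ k ∈ range (L + 1),
        s ^ ((k : ℤ) * (k - 1) - a * (a - 1)) * (qBin (s ^ 2) L k * qT s 1 k a) =
      ∑ n ∈ range (L + 1),
        (s ^ 2) ^ ((n : ℤ) * (n + a - 1)) * qBin (s ^ 2) L n * qBin (s ^ 2) L (n + a) := by
  have hx0 : s ^ 2 ≠ 0 := pow_ne_zero 2 h0
  have hx : ¬ IsOfFinOrder (s ^ 2) := fun h => hs (h.of_pow two_ne_zero)
  let g (m : ℕ) (k : ℤ) : RatFunc ℚ :=
    s ^ (k * (k - 1) - a * (a - 1)) * s ^ ((k - a - 2 * m) * (k - a - 2 * m - 1)) * qPoch (s ^ 2) L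
  have hg (m n : ℕ) : g m (n + m + a) =
      (s ^ 2) ^ ((n : ℤ) * (n + a - 1)) * (s ^ 2) ^ ((m : ℤ) * (m + a)) * qPoch (s ^ 2) L := by
    simp only [g, ← zpow_natCast s 2, ← zpow_mul, ← zpow_add₀ h0]
    push_cast
    ring_nf
  calc
    _ = ∑ k ∈ range (L + 1), ∑ m ∈ range (L + 1), g m k * (invQPoch (s ^ 2) (L - k) *
        invQPoch (s ^ 2) m * invQPoch (s ^ 2) (m + a) * invQPoch (s ^ 2) (k - a - 2 * m)) := by
      refine sum_congr rfl fun k hk => ?_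
      rw [qBin_mul_qT_eq_sum_invQPoch hx 1 (mem_range_succ_iff.mp hk), mul_sum]
      exact sum_congr rfl fun m _ => by ring
    _ = ∑ n ∈ range (L + 1), ∑ m ∈ range (L + 1), g m (n + m + a) *
        (invQPoch (s ^ 2) (L - n - (m + a)) * invQPoch (s ^ 2) m * invQPoch (s ^ 2) (m + a) *
          invQPoch (s ^ 2) (n - m)) := by
      rw [sum_comm]
      simp only [sum_mul_invQPoch_shift]
      rw [sum_comm]
    _ = ∑ n ∈ range (L + 1), (s ^ 2) ^ ((n : ℤ) * (n + a - 1)) * qBin (s ^ 2) L n *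
        ∑ m ∈ range (L + 1), (s ^ 2) ^ ((m : ℤ) * (m + a)) * qBin (s ^ 2) n m *
          qBin (s ^ 2) (L - n : ℕ) (m + a) := by
      refine sum_congr rfl fun n hn => ?_
      rw [mul_sum]
      refine sum_congr rfl fun m _ => ?_
      rw [hg]
      linear_combination (-(s ^ 2) ^ ((n : ℤ) * (n + a - 1)) * (s ^ 2) ^ ((m : ℤ) * (m + a))) *
        qBin_mul_qBin_mul_qBin hx (mem_range_succ_iff.mp hn) m (m + a)
    _ = _ := by
      refine sum_congr rfl fun n hn => ?_
      rw [qVandermonde hx0 hx (mem_range.mp hn),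
        Nat.add_sub_cancel' (mem_range_succ_iff.mp hn)]

end QTrinomial

theorem stmt7_general {s : RatFunc ℚ} (h0 : s ≠ 0) (hs : ¬ IsOfFinOrder s) (L : ℕ) (a : ℤ) :
    qBin (s ^ 2) (2 * (L : ℤ)) ((L : ℤ) - a) =
      ∑ k ∈ Finset.range (L + 1),
        s ^ ((k : ℤ) * ((k : ℤ) - 1) - a * (a - 1)) *
          ((1 + (s ^ 2) ^ (L : ℤ)) / (1 + (s ^ 2) ^ a)) *
          qBin (s ^ 2) (L : ℤ) (k : ℤ) * qT s 1 k a := by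
  have hx0 : s ^ 2 ≠ 0 := pow_ne_zero 2 h0
  have hx : ¬ IsOfFinOrder (s ^ 2) := fun h => hs (h.of_pow two_ne_zero)
  have symm : qBin (s ^ 2) (2 * (L : ℤ)) (L - a) = qBin (s ^ 2) (2 * L : ℕ) (L + a) := by
    rw [← qBin_sub_right]
    push_cast
    ring_nf
  calc qBin (s ^ 2) (2 * (L : ℤ)) (L - a)
    _ = (1 + (s ^ 2) ^ L) / (1 + (s ^ 2) ^ a) * ∑ k ∈ range (L + 1),
        s ^ ((k : ℤ) * (k - 1) - a * (a - 1)) * (qBin (s ^ 2) L k * qT s 1 k a) := by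
      rw [sum_zpow_mul_qBin_mul_qT h0 hs, div_mul_eq_mul_div,
        one_add_pow_mul_sum_zpow_sub_one_mul_qBin_mul_qBin hx0 hx,
        mul_div_cancel_left₀ _ (one_add_zpow_ne_zero hx a), symm]
    _ = _ := by
      rw [mul_sum, zpow_natCast]
      exact sum_congr rfl fun k _ => by ring

theorem stmt7 (L : ℕ) (a : ℤ) :
    qBin (qq ^ 2) (2 * (L : ℤ)) ((L : ℤ) - a) =
      ∑ k ∈ Finset.range (L + 1),
        qq ^ ((k : ℤ) * ((k : ℤ) - 1) - a * (a - 1)) *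
          ((1 + (qq ^ 2) ^ (L : ℤ)) / (1 + (qq ^ 2) ^ a)) *
          qBin (qq ^ 2) (L : ℤ) (k : ℤ) * qT qq 1 k a :=
  stmt7_general RatFunc.X_ne_zero not_isOfFinOrder_ratFunc_X L a
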